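/- Let H and K be complex Hilbert spaces, let V : H → K be an isometry, let π : B(H) → B(K) be a unital *-homomorphism, set P = VV* and define φ(X) = V*π(X)V for X ∈ B(H). Then for every X ∈ B(H), ‖Pπ(X) − π(X)P‖ = max( ‖φ(X*X) − φ(X)*φ(X)‖^{1/2}, ‖φ(XX*) − φ(X)φ(X*)‖^{1/2} ). -/

import Mathlib

theorem le_of_sq_le_sq_aux {a b : ℝ} (h : a ^ 2 ≤ b ^ 2) (hb : 0 ≤ b) : a ≤ b :=
  (le_abs_self a).trans (abs_le_of_sq_le_sq h hb)


open ContinuousLinearMap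

noncomputable section

/-- let `V : H → K` be an isometry, `π : B(H) → B(K)` a unital
`*`-homomorphism, `P = VV*` and `φ(X) = V*π(X)V`.  Then for every `X ∈ B(H)`,
`‖Pπ(X) - π(X)P‖ = max(‖φ(X*X) - φ(X)*φ(X)‖^{1/2}, ‖φ(XX*) - φ(X)φ(X*)‖^{1/2})`. -/
theorem stmt4 {H K : Type*} [NormedAddCommGroup H] [InnerProductSpace ℂ H] [CompleteSpace H]
    [NormedAddCommGroup K] [InnerProductSpace ℂ K] [CompleteSpace K]
    (V : H →L[ℂ] K) (hV : (adjoint V) ∘L V = ContinuousLinearMap.id ℂ H)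
    (π : (H →L[ℂ] H) →⋆ₐ[ℂ] (K →L[ℂ] K)) (X : H →L[ℂ] H)
    (P : K →L[ℂ] K) (hP : P = V ∘L adjoint V)
    (φ : (H →L[ℂ] H) → (H →L[ℂ] H)) (hφ : ∀ Y, φ Y = adjoint V ∘L (π Y ∘L V)) :
    ‖P * π X - π X * P‖ =
      max (Real.sqrt ‖φ (star X * X) - star (φ X) * φ X‖)
        (Real.sqrt ‖φ (X * star X) - φ X * φ (star X)‖) := by
  have hVV : ∀ h, adjoint V (V h) = h := fun h => by
    simpa using congrArg (fun f => f h) hV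
  set T := π X with hT
  have hTs : π (adjoint X) = adjoint T := map_star π X
  obtain ⟨Q, hQ⟩ : ∃ Q : K →L[ℂ] K, Q = 1 - V ∘L adjoint V := ⟨_, rfl⟩
  have hQa : ∀ k, Q k = k - V (adjoint V k) := fun k => by simp [hQ]
  have hQadj : adjoint Q = Q := by
    rw [hQ, map_sub, adjoint_comp, adjoint_adjoint]
    congr 1
    exact star_one _
  have hVQ : ∀ k, adjoint V (Q k) = 0 := fun k => by
    rw [hQa, map_sub, hVV, sub_self]
  have hQV : ∀ h, Q (V h) = 0 := fun h => by rw [hQa, hVV, sub_self]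
  have hQQ : ∀ k, Q (Q k) = Q k := fun k => by
    rw [hQa (Q k), hVQ, map_zero, sub_zero]
  have hVn : ∀ h, ‖V h‖ = ‖h‖ := by
    intro h
    have h1 : inner ℂ (V h) (V h) = inner ℂ h h := by
      rw [← adjoint_inner_right, hVV]
    rw [inner_self_eq_norm_sq_to_K, inner_self_eq_norm_sq_to_K] at h1
    have h2 : ‖V h‖ ^ 2 = ‖h‖ ^ 2 := by exact_mod_cast h1
    exact (pow_left_inj₀ (norm_nonneg _) (norm_nonneg _) two_ne_zero).1 h2
  have pyth : ∀ h k, ‖V h + Q k‖ ^ 2 = ‖h‖ ^ 2 + ‖Q k‖ ^ 2 := by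
    intro h k
    have h0 : inner ℂ (V h) (Q k) = 0 := by
      rw [← adjoint_inner_right, hVQ, inner_zero_right]
    have := norm_add_sq_eq_norm_sq_add_norm_sq_of_inner_eq_zero _ _ h0
    rw [hVn] at this
    nlinarith [this]
  have dec : ∀ k, ‖k‖ ^ 2 = ‖adjoint V k‖ ^ 2 + ‖Q k‖ ^ 2 := by
    intro k
    rw [← pyth, hQa]
    congr 2
    abel
  have hQle : ∀ k, ‖Q k‖ ≤ ‖k‖ := fun k =>
    le_of_sq_le_sq_aux (by nlinarith [dec k, sq_nonneg ‖adjoint V k‖]) (norm_nonneg _)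
  have hVle : ∀ k, ‖adjoint V k‖ ≤ ‖k‖ := fun k =>
    le_of_sq_le_sq_aux (by nlinarith [dec k, sq_nonneg ‖Q k‖]) (norm_nonneg _)
  have e1 : Real.sqrt ‖φ (star X * X) - star (φ X) * φ X‖ = ‖Q ∘L T ∘L V‖ := by
    have : φ (star X * X) - star (φ X) * φ X
        = adjoint (Q ∘L T ∘L V) ∘L (Q ∘L T ∘L V) := by
      simp only [hφ, map_mul, hTs, star_eq_adjoint, adjoint_comp, adjoint_adjoint, hQadj,
        ← hT]
      ext h
      simp [hQQ]
      simp [hQa]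
    rw [this, norm_adjoint_comp_self, Real.sqrt_mul_self (norm_nonneg _)]
  have e2 : Real.sqrt ‖φ (X * star X) - φ X * φ (star X)‖ = ‖adjoint V ∘L T ∘L Q‖ := by
    have : φ (X * star X) - φ X * φ (star X)
        = adjoint (adjoint (adjoint V ∘L T ∘L Q)) ∘L adjoint (adjoint V ∘L T ∘L Q) := by
      simp only [hφ, map_mul, hTs, star_eq_adjoint, adjoint_comp, adjoint_adjoint, hQadj,
        ← hT]
      ext h
      simp [hQQ]
      simp [hQa]
    rw [this, norm_adjoint_comp_self, Real.sqrt_mul_self (norm_nonneg _),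
      LinearIsometryEquiv.norm_map]
  rw [e1, e2]
  have hC : ∀ k, (P * T - T * P) k
      = V ((adjoint V ∘L T ∘L Q) (Q k)) + Q (- (T (V (adjoint V k)))) := by
    intro k
    simp only [hP, sub_apply, mul_apply_eq_comp, comp_apply, hQQ]
    simp only [hQa, map_sub, map_neg]
    abel
  apply le_antisymm
  · refine opNorm_le_bound _ (le_max_of_le_left (norm_nonneg _)) fun k => ?_
    set M := max ‖Q ∘L T ∘L V‖ ‖adjoint V ∘L T ∘L Q‖
    have hM : 0 ≤ M := le_max_of_le_left (norm_nonneg _)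
    have h1 : ‖(adjoint V ∘L T ∘L Q) (Q k)‖ ≤ M * ‖Q k‖ :=
      le_of_opNorm_le _ (le_max_right _ _) _
    have h2 : ‖(Q ∘L T ∘L V) (adjoint V k)‖ ≤ M * ‖adjoint V k‖ :=
      le_of_opNorm_le _ (le_max_left _ _) _
    have h3 : ‖Q (- (T (V (adjoint V k))))‖ = ‖(Q ∘L T ∘L V) (adjoint V k)‖ := by
      simp
    refine le_of_sq_le_sq_aux ?_ (by positivity)
    rw [hC, pyth, h3, mul_pow, dec k]
    have := pow_le_pow_left₀ (norm_nonneg _) h1 2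
    have := pow_le_pow_left₀ (norm_nonneg _) h2 2
    nlinarith
  · refine max_le ?_ ?_
    · refine opNorm_le_bound _ (norm_nonneg _) fun h => ?_
      have : (Q ∘L T ∘L V) h = - Q ((P * T - T * P) (V h)) := by
        rw [hC, map_add, hQV, hQQ, hVV]
        simp
      rw [this, norm_neg]
      refine (hQle _).trans ((le_opNorm _ _).trans ?_)
      rw [hVn]
    · refine opNorm_le_bound _ (norm_nonneg _) fun k => ?_
      have : (adjoint V ∘L T ∘L Q) k = adjoint V ((P * T - T * P) (Q k)) := by
        rw [hC, map_add, hVQ, hVV]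
        simp [hQQ]
      rw [this]
      refine (hVle _).trans ((le_opNorm _ _).trans ?_)
      gcongr
      exact hQle k
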